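/- There exists a universal constant C > 0 such that for every integer n ≥ 2 and every skew-symmetric n × n real matrix W (i.e., W(u,v) = −W(v,u) for all u, v), one has ∑_{1 ≤ u < v ≤ n} W(u,v) ≤ C · (log n) · ‖W‖_cut. -/

import Mathlib

/-- The cut norm of an `n × n` real matrix. -/
noncomputable def cutNorm {n : ℕ} (W : Matrix (Fin n) (Fin n) ℝ) : ℝ :=
  sSup {x : ℝ | ∃ S T : Finset (Fin n), x = |∑ u ∈ S, ∑ v ∈ T, W u v|}

theorem aux_le_cut {n : ℕ} (W : Matrix (Fin n) (Fin n) ℝ) (S T : Finset (Fin n)) :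
    |∑ u ∈ S, ∑ v ∈ T, W u v| ≤ cutNorm W := by
  apply le_csSup
  · have : {x : ℝ | ∃ S T : Finset (Fin n), x = |∑ u ∈ S, ∑ v ∈ T, W u v|} =
        Set.range (fun p : Finset (Fin n) × Finset (Fin n) => |∑ u ∈ p.1, ∑ v ∈ p.2, W u v|) := by
      ext x
      constructor
      · rintro ⟨S, T, h⟩
        exact ⟨(S, T), h.symm⟩
      · rintro ⟨⟨S, T⟩, h⟩
        exact ⟨S, T, h.symm⟩
    rw [this]
    exact (Set.finite_range _).bddAbove
  · exact ⟨S, T, rfl⟩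

theorem aux_signs (M : ℕ → ℕ → ℝ) (s : Finset ℕ) :
    ∃ e : ℕ → ℝ, (∀ i, e i = 1 ∨ e i = -1) ∧
      ∑ i ∈ s, M i i ≤ ∑ i ∈ s, ∑ j ∈ s, e i * e j * M i j := by
  classical
  induction s using Finset.induction_on with
  | empty => exact ⟨fun _ => 1, fun _ => Or.inl rfl, by simp⟩
  | insert a s ha ih =>
    obtain ⟨e, he, hs⟩ := ih
    set c : ℝ := ∑ j ∈ s, e j * M a j + ∑ i ∈ s, e i * M i a with hc
    obtain ⟨t, ht, htc⟩ : ∃ t : ℝ, (t = 1 ∨ t = -1) ∧ 0 ≤ t * c := by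
      rcases le_total 0 c with h | h
      · exact ⟨1, Or.inl rfl, by linarith⟩
      · exact ⟨-1, Or.inr rfl, by linarith⟩
    refine ⟨Function.update e a t, ?_, ?_⟩
    · intro i
      by_cases h : i = a
      · subst h; simpa using ht
      · simpa [Function.update_of_ne h] using he i
    · have hu : ∀ i ∈ s, Function.update e a t i = e i := by
        intro i hi
        have hne : i ≠ a := by
          rintro rfl
          exact ha hi
        exact Function.update_of_ne hne _ _
      have h1 : ∑ j ∈ s, t * Function.update e a t j * M a j = t * ∑ j ∈ s, e j * M a j := by
        rw [Finset.mul_sum]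
        refine Finset.sum_congr rfl fun j hj => ?_
        rw [hu j hj]; ring
      have h2 : ∑ i ∈ s, Function.update e a t i * t * M i a = t * ∑ j ∈ s, e j * M j a := by
        rw [Finset.mul_sum]
        refine Finset.sum_congr rfl fun j hj => ?_
        rw [hu j hj]; ring
      have h3 : ∑ i ∈ s, ∑ j ∈ s, Function.update e a t i * Function.update e a t j * M i j
          = ∑ i ∈ s, ∑ j ∈ s, e i * e j * M i j := by
        refine Finset.sum_congr rfl fun i hi => Finset.sum_congr rfl fun j hj => ?_
        rw [hu j hj, hu i hi]
      have htt : t * t = 1 := by rcases ht with h | h <;> rw [h] <;> norm_num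
      simp only [Finset.sum_insert ha, Finset.sum_add_distrib, Function.update_self]
      rw [h1, h2, h3, htt]
      rw [hc, mul_add] at htc
      linarith

theorem aux_bilin {n : ℕ} (W : Matrix (Fin n) (Fin n) ℝ) (S T : Finset (Fin n))
    (x : Fin n → ℝ) (hx : ∀ i, x i = 1 ∨ x i = -1) :
    ∑ u ∈ S, ∑ v ∈ T, x u * x v * W u v ≤ 4 * cutNorm W := by
  classical
  have key : ∀ (S : Finset (Fin n)) (g : Fin n → ℝ), ∑ u ∈ S, x u * g u =
      ∑ u ∈ S.filter (fun u => x u = 1), g u - ∑ u ∈ S.filter (fun u => ¬ x u = 1), g u := by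
    intro S g
    rw [← Finset.sum_filter_add_sum_filter_not S (fun u => x u = 1), sub_eq_add_neg,
      ← Finset.sum_neg_distrib]
    congr 1
    · refine Finset.sum_congr rfl fun u hu => ?_
      rw [(Finset.mem_filter.1 hu).2, one_mul]
    · refine Finset.sum_congr rfl fun u hu => ?_
      rw [(hx u).resolve_left (Finset.mem_filter.1 hu).2]; ring
  have h : ∑ u ∈ S, ∑ v ∈ T, x u * x v * W u v = ∑ u ∈ S, x u * ∑ v ∈ T, x v * W u v := by
    simp only [Finset.mul_sum, mul_assoc]
  rw [h, key]
  simp only [key, Finset.sum_sub_distrib]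
  have a := fun S T => abs_le.1 (aux_le_cut W S T)
  linarith [(a (S.filter (fun u => x u = 1)) (T.filter (fun u => x u = 1))).2,
    (a (S.filter (fun u => ¬ x u = 1)) (T.filter (fun u => ¬ x u = 1))).2,
    (a (S.filter (fun u => x u = 1)) (T.filter (fun u => ¬ x u = 1))).1,
    (a (S.filter (fun u => ¬ x u = 1)) (T.filter (fun u => x u = 1))).1]

theorem aux_level {n : ℕ} (W : Matrix (Fin n) (Fin n) ℝ) (S T : Finset (Fin n))
    (f : Fin n → ℕ) :
    ∑ u ∈ S, ∑ v ∈ T, (if f u = f v then W u v else 0) ≤ 4 * cutNorm W := by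
  classical
  set J : Finset ℕ := Finset.univ.image f
  have hJ : ∀ S : Finset (Fin n), ∀ u ∈ S, f u ∈ J := fun S u _ =>
    Finset.mem_image_of_mem _ (Finset.mem_univ _)
  obtain ⟨e, he, hs⟩ := aux_signs
    (fun i j => ∑ u ∈ S.filter (fun u => f u = i), ∑ v ∈ T.filter (fun v => f v = j), W u v) J
  have h1 : ∑ u ∈ S, ∑ v ∈ T, (if f u = f v then W u v else 0) =
      ∑ i ∈ J, ∑ u ∈ S.filter (fun u => f u = i), ∑ v ∈ T.filter (fun v => f v = i), W u v := by
    rw [← Finset.sum_fiberwise_of_maps_to (hJ S)]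
    refine Finset.sum_congr rfl fun i _ => Finset.sum_congr rfl fun u hu => ?_
    rw [Finset.sum_filter, (Finset.mem_filter.1 hu).2]
    simp only [eq_comm]
  have h2 : ∑ u ∈ S, ∑ v ∈ T, e (f u) * e (f v) * W u v =
      ∑ i ∈ J, ∑ j ∈ J, e i * e j *
        ∑ u ∈ S.filter (fun u => f u = i), ∑ v ∈ T.filter (fun v => f v = j), W u v := by
    rw [← Finset.sum_fiberwise_of_maps_to (hJ S)]
    refine Finset.sum_congr rfl fun i _ => ?_
    simp only [Finset.mul_sum]
    rw [Finset.sum_comm (s := J)]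
    refine Finset.sum_congr rfl fun u hu => ?_
    rw [← Finset.sum_fiberwise_of_maps_to (hJ T)]
    refine Finset.sum_congr rfl fun j _ => Finset.sum_congr rfl fun v hv => ?_
    rw [(Finset.mem_filter.1 hu).2, (Finset.mem_filter.1 hv).2]
  rw [h1]
  refine hs.trans ?_
  rw [← h2]
  exact aux_bilin W S T (fun u => e (f u)) (fun u => he _)

theorem aux_step {n : ℕ} (W : Matrix (Fin n) (Fin n) ℝ) (g : Fin n → ℕ) :
    ∑ u, ∑ v, (if g u < g v then W u v else 0) ≤
      ∑ u, ∑ v, (if g u / 2 < g v / 2 then W u v else 0) + 4 * cutNorm W := by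
  classical
  have h := aux_level W (Finset.univ.filter fun u => g u % 2 = 0)
    (Finset.univ.filter fun u => g u % 2 = 1) (fun u => g u / 2)
  have h2 : ∑ u, ∑ v, (if g u < g v then W u v else 0) =
      ∑ u, ∑ v, (if g u / 2 < g v / 2 then W u v else 0) +
      ∑ u ∈ (Finset.univ.filter fun u => g u % 2 = 0),
        ∑ v ∈ (Finset.univ.filter fun u => g u % 2 = 1),
          (if g u / 2 = g v / 2 then W u v else 0) := by
    simp only [Finset.sum_filter]
    rw [← Finset.sum_add_distrib]
    refine Finset.sum_congr rfl fun u _ => ?_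
    rw [← Finset.sum_const_zero (s := (Finset.univ : Finset (Fin n))), ← Finset.sum_ite_irrel,
      ← Finset.sum_add_distrib]
    refine Finset.sum_congr rfl fun v _ => ?_
    split_ifs <;> first | omega | simp
  linarith

theorem aux_iter {n : ℕ} (W : Matrix (Fin n) (Fin n) ℝ) (K : ℕ) :
    ∑ u : Fin n, ∑ v : Fin n, (if u.1 < v.1 then W u v else 0) ≤
      ∑ u : Fin n, ∑ v : Fin n, (if u.1 / 2 ^ K < v.1 / 2 ^ K then W u v else 0)
        + K * (4 * cutNorm W) := by
  induction K with
  | zero => simp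
  | succ K ih =>
    have h := aux_step W (fun u => u.1 / 2 ^ K)
    simp only [Nat.div_div_eq_div_mul, ← pow_succ] at h
    push_cast
    linarith

theorem upperTriangular_sum_le_log_mul_cutNorm :
    ∃ C : ℝ, 0 < C ∧ ∀ n : ℕ, 2 ≤ n → ∀ W : Matrix (Fin n) (Fin n) ℝ,
      (∀ u v, W u v = -W v u) →
      ∑ p ∈ Finset.univ.filter (fun p : Fin n × Fin n => p.1 < p.2), W p.1 p.2 ≤
        C * Real.log n * cutNorm W := by
  have hl2 : 0 < Real.log 2 := Real.log_pos (by norm_num)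
  refine ⟨8 / Real.log 2, by positivity, ?_⟩
  intro n hn W _
  have hc : 0 ≤ cutNorm W := (abs_nonneg _).trans (aux_le_cut W ∅ ∅)
  have h := aux_iter W (Nat.log 2 n + 1)
  have hz : ∀ u : Fin n, u.1 / 2 ^ (Nat.log 2 n + 1) = 0 := fun u =>
    Nat.div_eq_of_lt (u.2.trans (Nat.lt_pow_succ_log_self (by norm_num) n))
  simp only [hz, lt_irrefl, if_false, Finset.sum_const_zero, zero_add] at h
  have hL : (1 : ℝ) ≤ (Nat.log 2 n : ℕ) := by
    exact_mod_cast Nat.log_pos (by norm_num) hn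
  have hlog : (Nat.log 2 n : ℝ) * Real.log 2 ≤ Real.log n := by
    rw [← Real.log_pow]
    apply Real.log_le_log (by positivity)
    exact_mod_cast Nat.pow_log_le_self 2 (by omega)
  have hlog' : (Nat.log 2 n : ℝ) ≤ Real.log n / Real.log 2 := by
    rwa [le_div_iff₀ hl2]
  have e1 : ∑ p ∈ Finset.univ.filter (fun p : Fin n × Fin n => p.1 < p.2), W p.1 p.2 =
      ∑ u : Fin n, ∑ v : Fin n, (if u.1 < v.1 then W u v else 0) := by
    rw [Finset.sum_filter, Fintype.sum_prod_type]
    rfl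
  rw [e1]
  refine h.trans ?_
  push_cast
  have e2 : 8 / Real.log 2 * Real.log n * cutNorm W =
    (2 * (Real.log n / Real.log 2)) * (4 * cutNorm W) := by ring
  rw [e2]
  apply mul_le_mul_of_nonneg_right _ (by positivity)
  linarith
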